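/- Let g : ℝ^d → Y be a measurable function into a finite label set Y, let σ > 0, and define the randomized classifier M(X) as the distribution of g(X + z) with z ∼ N(0, σ²I_d). Let X ∈ ℝ^d, y₊ ∈ Y, and p₊, p₋ ∈ (0,1) satisfy P(M(X) = y₊) ≥ p₊ ≥ p₋ ≥ max_{y ≠ y₊} P(M(X) = y). Set r_X = (σ/2)(Φ⁻¹(p₊) − Φ⁻¹(p₋)). Then for every e ∈ ℝ^d with ‖e‖₂ ≤ r_X and every y ∈ Y, P(g(X + e + z) = y₊) ≥ P(g(X + e + z) = y); that is, y₊ remains a most probable class of the smoothed classifier at X + e. -/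

import Mathlib

open MeasureTheory ProbabilityTheory Real
open scoped NNReal ENNReal

/-- Standard normal CDF Φ. -/
noncomputable def Phi (x : ℝ) : ℝ := ((gaussianReal 0 1) (Set.Iic x)).toReal

/-- Inverse of the standard normal CDF, Φ⁻¹. -/
noncomputable def PhiInv (q : ℝ) : ℝ := Function.invFun Phi q

/-- The trade-off function of the Gaussian mechanism, `G_μ(α) = Φ(Φ⁻¹(1-α) − μ)`. -/
noncomputable def Gmu (μ α : ℝ) : ℝ := Phi (PhiInv (1 - α) - μ)

/-- Euclidean (L2) norm on `ℝ^n`. -/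
noncomputable def l2norm {n : ℕ} (x : Fin n → ℝ) : ℝ := Real.sqrt (∑ i, (x i) ^ 2)

/-- Maximum (L∞) norm on `ℝ^n`. -/
noncomputable def linftyNorm {n : ℕ} (x : Fin n → ℝ) : ℝ := ⨆ i, |x i|

/-- Lp norm on `ℝ^n`. -/
noncomputable def lpNorm {n : ℕ} (p : ℝ) (x : Fin n → ℝ) : ℝ := (∑ i, |x i| ^ p) ^ (1 / p)

/-- `T(P,Q) ≥ f`: every measurable `[0,1]`-valued test `φ` has type II error
`1 − ∫ φ dQ` at least `f` of its level `∫ φ dP`. -/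
def TradeoffGE {Ω : Type*} [MeasurableSpace Ω] (P Q : Measure Ω) (f : ℝ → ℝ) : Prop :=
  ∀ φ : Ω → ℝ, Measurable φ → (∀ ω, φ ω ∈ Set.Icc (0 : ℝ) 1) →
    1 - ∫ ω, φ ω ∂Q ≥ f (∫ ω, φ ω ∂P)

/-- The Gaussian measure `N(v, s·I_d)` on `ℝ^d` (spherical covariance `s ≥ 0`). -/
noncomputable def gaussPi (d : ℕ) (v : Fin d → ℝ) (s : ℝ≥0) : Measure (Fin d → ℝ) :=
  Measure.pi fun i => gaussianReal (v i) s

lemma aux_np {Ω : Type*} [MeasurableSpace Ω] (μ ν : Measure Ω) [IsFiniteMeasure μ]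
    (f : Ω → ℝ≥0∞) (hν : ν = μ.withDensity f) (k : ℝ≥0∞)
    {H A : Set Ω} (hH : MeasurableSet H) (hA : MeasurableSet A)
    (h1 : ∀ x ∈ H, f x ≤ k) (h2 : ∀ x ∉ H, k ≤ f x) (h : μ H ≤ μ A) : ν H ≤ ν A := by
  have e1 : ν (H \ A) ≤ k * μ (H \ A) := by
    rw [hν, withDensity_apply _ (hH.diff hA), ← setLIntegral_const]
    exact setLIntegral_mono' (hH.diff hA) fun x hx => h1 x hx.1
  have e2 : k * μ (A \ H) ≤ ν (A \ H) := by
    rw [hν, withDensity_apply _ (hA.diff hH), ← setLIntegral_const]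
    exact setLIntegral_mono' (hA.diff hH) fun x hx => h2 x hx.2
  have e3 : μ (H \ A) ≤ μ (A \ H) := by
    rw [← measure_sdiff_add_inter H hA, ← measure_sdiff_add_inter A hH, Set.inter_comm A H] at h
    exact (ENNReal.add_le_add_iff_right (measure_ne_top _ _)).1 h
  rw [← measure_sdiff_add_inter H hA, ← measure_sdiff_add_inter A hH, Set.inter_comm A H]
  refine add_le_add_left ?_ _
  exact e1.trans ((mul_le_mul_right e3 k).trans e2)

lemma aux_gauss1 (m : ℝ) (v : ℝ≥0) (hv : v ≠ 0) : gaussianReal m v =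
    (gaussianReal 0 v).withDensity
      (fun x => ENNReal.ofReal (rexp (m * x / v - m ^ 2 / (2 * v)))) := by
  have hv' : (v : ℝ) ≠ 0 := by exact_mod_cast hv
  rw [gaussianReal_of_var_ne_zero _ hv, gaussianReal_of_var_ne_zero _ hv,
    ← withDensity_mul _ (measurable_gaussianPDF _ _) (by fun_prop)]
  congr 1
  ext x
  simp only [Pi.mul_apply, gaussianPDF]
  rw [← ENNReal.ofReal_mul (gaussianPDFReal_nonneg _ _ _)]
  congr 1
  simp only [gaussianPDFReal]
  rw [mul_assoc (√(2 * π * v))⁻¹, ← Real.exp_add]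
  congr 2
  field_simp
  ring

lemma aux_map {d : ℕ} (e : Fin d → ℝ) (v : ℝ≥0) :
    (gaussPi d 0 v).map (fun z => e + z) = gaussPi d e v := by
  unfold gaussPi
  have := Measure.pi_map_pi (μ := fun i : Fin d => gaussianReal ((0 : Fin d → ℝ) i) v)
    (f := fun i x => e i + x) (fun i => by fun_prop)
  simp only [gaussianReal_map_const_add, Pi.zero_apply, zero_add] at this
  exact this

lemma aux_dens {d : ℕ} (e : Fin d → ℝ) (v : ℝ≥0) (hv : v ≠ 0) : gaussPi d e v =
    (gaussPi d 0 v).withDensity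
      (fun z => ENNReal.ofReal (rexp ((∑ i, e i * z i) / v - (∑ i, e i ^ 2) / (2 * v)))) := by
  unfold gaussPi
  refine Measure.pi_eq fun s hs => ?_
  rw [withDensity_apply _ (MeasurableSet.univ_pi hs), ← lintegral_indicator (MeasurableSet.univ_pi hs)]
  have hF : ∀ i, Measurable ((s i).indicator
      (fun x => ENNReal.ofReal (rexp (e i * x / v - e i ^ 2 / (2 * v))))) := fun i =>
    Measurable.indicator (by fun_prop) (hs i)
  have hi : iIndepFun (fun i (z : Fin d → ℝ) => (s i).indicator
      (fun x => ENNReal.ofReal (rexp (e i * x / v - e i ^ 2 / (2 * v)))) (z i))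
      (Measure.pi fun i : Fin d => gaussianReal ((0 : Fin d → ℝ) i) v) :=
    iIndepFun_pi fun i => (hF i).aemeasurable
  have key := lintegral_prod_eq_prod_lintegral_of_indepFun Finset.univ _ hi
    (fun i => (hF i).comp (measurable_pi_apply i))
  have h2 : ∀ i, ∫⁻ z : Fin d → ℝ, (s i).indicator
      (fun x => ENNReal.ofReal (rexp (e i * x / v - e i ^ 2 / (2 * v)))) (z i)
      ∂(Measure.pi fun i : Fin d => gaussianReal ((0 : Fin d → ℝ) i) v) =
      gaussianReal (e i) v (s i) := by
    intro i
    rw [(measurePreserving_eval (fun i : Fin d => gaussianReal ((0 : Fin d → ℝ) i) v)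
      i).lintegral_comp (hF i), lintegral_indicator (hs i), aux_gauss1 (e i) v hv,
      withDensity_apply _ (hs i)]
    rfl
  rw [Finset.prod_congr rfl (fun i _ => h2 i)] at key
  rw [← key]
  refine lintegral_congr fun z => ?_
  by_cases hz : z ∈ Set.univ.pi s
  · rw [Set.indicator_of_mem hz]
    rw [Finset.prod_congr rfl (fun i _ => Set.indicator_of_mem (hz i (Set.mem_univ i)) _),
      ← ENNReal.ofReal_prod_of_nonneg (fun i _ => (Real.exp_pos _).le), ← Real.exp_sum,
      Finset.sum_sub_distrib, Finset.sum_div, Finset.sum_div]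
  · rw [Set.indicator_of_notMem hz]
    simp only [Set.mem_pi, Set.mem_univ, true_implies, not_forall] at hz
    obtain ⟨i, hzi⟩ := hz
    exact (Finset.prod_eq_zero (Finset.mem_univ i) (Set.indicator_of_notMem hzi _)).symm

lemma aux_law {d : ℕ} (w : Fin d → ℝ) (v : ℝ≥0) (hw : ∑ i, w i ^ 2 * v = 1) :
    (gaussPi d 0 v).map (fun z => ∑ i, w i * z i) = gaussianReal 0 1 := by
  unfold gaussPi
  have hm : Measurable (fun z : Fin d → ℝ => ∑ i, w i * z i) := by fun_prop
  have : IsProbabilityMeasure ((Measure.pi fun i : Fin d => gaussianReal ((0 : Fin d → ℝ) i) v).map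
    (fun z => ∑ i, w i * z i)) := Measure.isProbabilityMeasure_map hm.aemeasurable
  refine Measure.ext_of_charFun ?_
  ext t
  rw [charFun_apply_real, integral_map hm.aemeasurable (by fun_prop)]
  have h1 : ∀ z : Fin d → ℝ, Complex.exp (t * ((∑ i, w i * z i : ℝ) : ℂ) * Complex.I) =
      ∏ i, Complex.exp (((t * w i : ℝ) : ℂ) * (z i : ℂ) * Complex.I) := by
    intro z
    rw [← Complex.exp_sum]
    congr 1
    push_cast
    rw [Finset.mul_sum, Finset.sum_mul]
    refine Finset.sum_congr rfl fun i _ => by ring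
  simp_rw [h1]
  rw [integral_fintype_prod_eq_prod (𝕜 := ℂ)
    (E := fun _ : Fin d => ℝ) (f := fun i (x : ℝ) => Complex.exp (((t * w i : ℝ) : ℂ) * (x : ℂ) * Complex.I))]
  simp_rw [← charFun_apply_real, charFun_gaussianReal]
  rw [← Complex.exp_sum]
  congr 1
  have hw' : ∑ i, (w i : ℂ) ^ 2 * ((v : ℝ) : ℂ) = 1 := by exact_mod_cast hw
  simp only [Pi.zero_apply, Complex.ofReal_zero, mul_zero, zero_mul, zero_sub]
  rw [Finset.sum_neg_distrib, ← Finset.sum_div]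
  congr 2
  rw [NNReal.coe_one, Complex.ofReal_one, ← hw', Finset.sum_mul]
  refine Finset.sum_congr rfl fun i _ => by push_cast; ring

lemma aux_Phi_neg (t : ℝ) : Phi (-t) = 1 - Phi t := by
  unfold Phi
  have := nullSingletonClass_gaussianReal (μ := 0) (v := 1) one_ne_zero
  change (gaussianReal 0 1).real _ = 1 - (gaussianReal 0 1).real _
  rw [← probReal_compl_eq_one_sub measurableSet_Iic, Set.compl_Iic]
  have h := gaussianReal_map_neg (μ := 0) (v := 1)
  rw [neg_zero] at h
  nth_rewrite 1 [← h]
  rw [map_measureReal_apply (by fun_prop) measurableSet_Iic]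
  have : (fun x : ℝ => -x) ⁻¹' Set.Iic (-t) = Set.Ici t := by ext; simp
  rw [this]
  exact measureReal_congr Ioi_ae_eq_Ici.symm

lemma aux_Phi_mono : Monotone Phi := fun _ _ h =>
  ENNReal.toReal_mono (measure_ne_top _ _) (measure_mono (Set.Iic_subset_Iic.2 h))

lemma aux_Phi_inv {p : ℝ} (hp : p ∈ Set.Ioo (0 : ℝ) 1) : Phi (PhiInv p) = p := by
  refine Function.invFun_eq ?_
  have hc : Phi = cdf (gaussianReal 0 1) := by
    ext x; rw [cdf_eq_real]; rfl
  have hcont : Continuous Phi := by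
    have := nullSingletonClass_gaussianReal (μ := 0) (v := 1) one_ne_zero
    rw [hc, continuous_iff_continuousAt]
    intro x
    rw [(monotone_cdf _).continuousAt_iff_leftLim_eq_rightLim, StieltjesFunction.rightLim_eq]
    have h0 : (cdf (gaussianReal 0 1)).measure {x} = 0 := by
      rw [measure_cdf]; exact measure_singleton x
    rw [StieltjesFunction.measure_singleton, ENNReal.ofReal_eq_zero] at h0
    exact le_antisymm ((monotone_cdf _).leftLim_le le_rfl) (by linarith)
  exact mem_range_of_exists_le_of_exists_ge hcont
    (by
      have := (tendsto_cdf_atBot (gaussianReal 0 1)).eventually (gt_mem_nhds hp.1)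
      rw [← hc] at this
      exact this.exists.imp fun _ h => h.le)
    (by
      have := (tendsto_cdf_atTop (gaussianReal 0 1)).eventually (lt_mem_nhds hp.2)
      rw [← hc] at this
      exact this.exists.imp fun _ h => h.le)

lemma aux_key {d : ℕ} (e : Fin d → ℝ) (σ : ℝ) (hσ : 0 < σ) (he : 0 < l2norm e)
    {A : Set (Fin d → ℝ)} (hA : MeasurableSet A) (t : ℝ)
    (h : Phi t ≤ (gaussPi d 0 (σ ^ 2).toNNReal).real A) :
    Phi (t - l2norm e / σ) ≤ (gaussPi d e (σ ^ 2).toNNReal).real A := by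
  set v : ℝ≥0 := (σ ^ 2).toNNReal with hv
  have hvr : (v : ℝ) = σ ^ 2 := Real.coe_toNNReal _ (by positivity)
  have hv0 : v ≠ 0 := by
    intro h; rw [h, NNReal.coe_zero] at hvr; exact (pow_pos hσ 2).ne hvr
  have hp : ∀ m, IsProbabilityMeasure (gaussPi d m v) := fun m => by
    unfold gaussPi; infer_instance
  have hn : ∑ i, e i ^ 2 = l2norm e ^ 2 :=
    (Real.sq_sqrt (Finset.sum_nonneg fun i _ => sq_nonneg _)).symm
  set n := l2norm e with hn'
  have hm : Measurable (fun z : Fin d → ℝ => ∑ i, e i * z i) := by fun_prop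
  have hlaw : ∀ t, (gaussPi d 0 v).real {z | ∑ i, e i * z i ≤ σ * n * t} = Phi t := by
    intro t
    have := aux_law (fun i => e i / (σ * n)) v (by
      simp_rw [div_pow, hvr]
      rw [← Finset.sum_mul, ← Finset.sum_div, hn]
      field_simp)
    unfold Phi
    rw [← this, Measure.map_apply (by fun_prop) measurableSet_Iic]
    congr 2
    ext z
    simp only [Set.mem_ofPred_eq, Set.mem_preimage, Set.mem_Iic]
    have : ∑ i, e i / (σ * n) * z i = (∑ i, e i * z i) / (σ * n) := by
      rw [Finset.sum_div]
      exact Finset.sum_congr rfl fun i _ => by ring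
    rw [this, div_le_iff₀ (by positivity), mul_comm t]
  have hH : MeasurableSet {z : Fin d → ℝ | ∑ i, e i * z i ≤ σ * n * t} :=
    measurableSet_le hm measurable_const
  have h1 : (gaussPi d e v).real {z | ∑ i, e i * z i ≤ σ * n * t} = Phi (t - n / σ) := by
    rw [← hlaw, ← aux_map, map_measureReal_apply (by fun_prop) hH]
    congr 1
    ext z
    simp only [Set.mem_ofPred_eq, Set.mem_preimage, Pi.add_apply, mul_add,
      Finset.sum_add_distrib]
    have h3 : ∑ i, e i * e i = n ^ 2 := by rw [← hn]; simp_rw [sq]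
    have h4 : σ * n * (t - n / σ) = σ * n * t - n ^ 2 := by field_simp
    rw [h3, h4]
    constructor <;> intro h <;> linarith
  rw [← h1]
  rw [← hlaw] at h
  refine ENNReal.toReal_mono (measure_ne_top _ _) ?_
  refine aux_np (gaussPi d 0 v) _ _ (aux_dens e v hv0)
    (ENNReal.ofReal (rexp ((σ * n * t) / v - (∑ i, e i ^ 2) / (2 * v)))) hH hA ?_ ?_
    ((ENNReal.toReal_le_toReal (measure_ne_top _ _) (measure_ne_top _ _)).1 h)
  · intro z hz
    rw [Set.mem_ofPred_eq] at hz
    gcongr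
  · intro z hz
    rw [Set.mem_ofPred_eq, not_le] at hz
    have := hz.le
    gcongr

/-- **Randomized smoothing certificate (L₂, from f-DP).**
For a measurable base classifier `g : ℝ^d → Y` smoothed with Gaussian noise `N(0, σ²I_d)`,
if `P(g(X+z) = y₊) ≥ p₊ ≥ p₋ ≥ max_{y ≠ y₊} P(g(X+z) = y)` then for every perturbation `e`
with `‖e‖₂ ≤ (σ/2)(Φ⁻¹(p₊) − Φ⁻¹(p₋))`, `y₊` remains a most probable class of the smoothed
classifier at `X + e`. -/
theorem rs_certificate_l2 {d : ℕ} {Y : Type*} [Fintype Y] [MeasurableSpace Y]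
    [MeasurableSingletonClass Y]
    (g : (Fin d → ℝ) → Y) (hg : Measurable g) (σ : ℝ) (hσ : 0 < σ)
    (X : Fin d → ℝ) (yPlus : Y) (pPlus pMinus : ℝ)
    (hpPlus : pPlus ∈ Set.Ioo (0 : ℝ) 1) (hpMinus : pMinus ∈ Set.Ioo (0 : ℝ) 1)
    (hplus : ((gaussPi d 0 (σ ^ 2).toNNReal) {z | g (X + z) = yPlus}).toReal ≥ pPlus)
    (horder : pPlus ≥ pMinus)
    (hminus : ∀ y : Y, y ≠ yPlus →
      ((gaussPi d 0 (σ ^ 2).toNNReal) {z | g (X + z) = y}).toReal ≤ pMinus) :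
    ∀ e : Fin d → ℝ, l2norm e ≤ σ / 2 * (PhiInv pPlus - PhiInv pMinus) → ∀ y : Y,
      ((gaussPi d 0 (σ ^ 2).toNNReal) {z | g (X + e + z) = yPlus}).toReal ≥
        ((gaussPi d 0 (σ ^ 2).toNNReal) {z | g (X + e + z) = y}).toReal := by
  intro e he y
  have hp : ∀ m, IsProbabilityMeasure (gaussPi d m (σ ^ 2).toNNReal) := fun m => by
    unfold gaussPi; infer_instance
  by_cases hy : y = yPlus
  · rw [hy]
  have hms : ∀ y, MeasurableSet {z | g (X + z) = y} := fun y =>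
    (hg.comp (measurable_const_add X)) (measurableSet_singleton y)
  rcases (show 0 ≤ l2norm e from Real.sqrt_nonneg _).eq_or_lt with h0 | h0
  · have hs : ∑ i, e i ^ 2 = 0 := (Real.sqrt_eq_zero
      (Finset.sum_nonneg fun i _ => sq_nonneg _)).1 h0.symm
    have e0 : e = 0 := by
      ext i
      exact pow_eq_zero_iff two_ne_zero |>.1
        ((Finset.sum_eq_zero_iff_of_nonneg fun i _ => sq_nonneg _).1 hs i (Finset.mem_univ i))
    rw [e0, add_zero]
    exact ((hminus y hy).trans horder).trans hplus
  · have hmv : ∀ y, ((gaussPi d 0 (σ ^ 2).toNNReal) {z | g (X + e + z) = y}).toReal =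
        (gaussPi d e (σ ^ 2).toNNReal).real {z | g (X + z) = y} := by
      intro y
      rw [← aux_map e, map_measureReal_apply (by fun_prop) (hms y)]
      simp only [Set.preimage_setOf_eq, add_assoc]
      rfl
    rw [hmv, hmv]
    have hA := aux_key e σ hσ h0 (hms yPlus) (PhiInv pPlus) (by
      rw [aux_Phi_inv hpPlus]; exact hplus)
    have hB := aux_key e σ hσ h0 (hms y).compl (-PhiInv pMinus) (by
      rw [aux_Phi_neg, aux_Phi_inv hpMinus, probReal_compl_eq_one_sub (hms y)]
      have : (gaussPi d 0 (σ ^ 2).toNNReal).real {z | g (X + z) = y} ≤ pMinus := hminus y hy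
      linarith)
    rw [probReal_compl_eq_one_sub (hms y), ← neg_add', aux_Phi_neg] at hB
    have hle : PhiInv pMinus + l2norm e / σ ≤ PhiInv pPlus - l2norm e / σ := by
      have : l2norm e / σ ≤ (PhiInv pPlus - PhiInv pMinus) / 2 := by
        rw [div_le_iff₀ hσ]; linarith
      linarith
    have := aux_Phi_mono hle
    linarith
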